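/- arXiv:2403.03801 — 7 statements merged into one kernel-verified Lean document; each statement's English description precedes it below -/
import Mathlib

section
/- Let K=(G,M,I) be a clarified formal context and let E=(J,P) be a conceptual one-dimensional Euler diagram corresponding to K under bijections φ: G → P and ψ: M → J. Then the map χ sending a formal concept (A,B) to the set ⋂_{b∈B} ψ(b) is injective from the set of formal concepts of K into the collection of intersections of subfamilies of J. -/
/- Common framework: formal contexts, derivations, concepts, one- and two-dimensional
Euler diagrams, linear extensions, realizers, order dimension, the Euler-poset,
the extended Euler-poset and standard examples. -/

namespace EulerFCA

variable {G M : Type}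

/-- Derivation of a set of objects: the attributes shared by all of them. -/
def objDeriv (I : G → M → Prop) (A : Set G) : Set M := {m | ∀ g ∈ A, I g m}

/-- Derivation of a set of attributes: the objects having all of them. -/
def attrDeriv (I : G → M → Prop) (B : Set M) : Set G := {g | ∀ m ∈ B, I g m}

/-- A formal context is clarified if distinct objects have distinct derivations and
distinct attributes have distinct derivations. -/
def Clarified (I : G → M → Prop) : Prop :=
  (∀ g h : G, objDeriv I {g} = objDeriv I {h} → g = h) ∧
  (∀ m n : M, attrDeriv I {m} = attrDeriv I {n} → m = n)

/-- A formal concept: a pair `(A, B)` with `A' = B` and `B' = A`. -/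
def IsConcept (I : G → M → Prop) (A : Set G) (B : Set M) : Prop :=
  objDeriv I A = B ∧ attrDeriv I B = A

/-- A one-dimensional Euler diagram corresponding to a context with object set `G` and
attribute set `M`: the bijection `φ` onto the finite point set `P` is represented by the
injective map `point`, and the bijection `ψ` onto the finite set `J` of closed intervals
is represented by the (as intervals injective) pair of maps `lo`, `hi` with `lo m ≤ hi m`,
interval `ψ m = [lo m, hi m]`. -/
structure EulerDiagram1D (G M : Type) where
  point : G → ℝ
  lo : M → ℝ
  hi : M → ℝ
  lo_le_hi : ∀ m, lo m ≤ hi m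
  point_inj : Function.Injective point
  interval_inj : ∀ m n : M, lo m = lo n → hi m = hi n → m = n

/-- The closed interval assigned to an attribute. -/
def EulerDiagram1D.interval (E : EulerDiagram1D G M) (m : M) : Set ℝ :=
  Set.Icc (E.lo m) (E.hi m)

/-- The diagram corresponds to the context `(G, M, I)`: incidence is containment. -/
def Corresponds1D (E : EulerDiagram1D G M) (I : G → M → Prop) : Prop :=
  ∀ g m, I g m ↔ E.point g ∈ E.interval m

/-- `x` is an endpoint of one of the intervals of the diagram. -/
def EulerDiagram1D.IsEndpoint (E : EulerDiagram1D G M) (x : ℝ) : Prop :=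
  ∃ m, E.lo m = x ∨ E.hi m = x

/-- Conceptual: between any two distinct interval endpoints there lies a point. -/
def EulerDiagram1D.Conceptual (E : EulerDiagram1D G M) : Prop :=
  ∀ a b : ℝ, E.IsEndpoint a → E.IsEndpoint b → a < b →
    ∃ g : G, a < E.point g ∧ E.point g < b

/-- A two-dimensional Euler diagram: injective points in `ℝ²` and (as rectangles
injective) closed axis-aligned rectangles `[lo m, hi m]`. -/
structure EulerDiagram2D (G M : Type) where
  point : G → ℝ × ℝ
  lo : M → ℝ × ℝ
  hi : M → ℝ × ℝ
  lo_le_hi₁ : ∀ m, (lo m).1 ≤ (hi m).1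
  lo_le_hi₂ : ∀ m, (lo m).2 ≤ (hi m).2
  point_inj : Function.Injective point
  rect_inj : ∀ m n : M, lo m = lo n → hi m = hi n → m = n

/-- The 2D diagram corresponds to the context: incidence is containment of the
point in the rectangle. -/
def Corresponds2D (E : EulerDiagram2D G M) (I : G → M → Prop) : Prop :=
  ∀ g m, I g m ↔ ((E.point g).1 ∈ Set.Icc (E.lo m).1 (E.hi m).1 ∧
                  (E.point g).2 ∈ Set.Icc (E.lo m).2 (E.hi m).2)

/-- `r` is a linear order relation (reflexive, antisymmetric, transitive, total). -/
def IsLinearOrderRel {X : Type} (r : X → X → Prop) : Prop :=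
  (∀ x, r x x) ∧ (∀ x y, r x y → r y x → x = y) ∧
  (∀ x y z, r x y → r y z → r x z) ∧ (∀ x y, r x y ∨ r y x)

/-- `r` is a linear extension of `s`. -/
def IsLinearExtension {X : Type} (s r : X → X → Prop) : Prop :=
  IsLinearOrderRel r ∧ ∀ x y, s x y → r x y

/-- A family of `n` linear extensions of `s` whose intersection is `s`. -/
def IsRealizer {X : Type} (s : X → X → Prop) {n : ℕ} (L : Fin n → X → X → Prop) : Prop :=
  (∀ i, IsLinearExtension s (L i)) ∧ (∀ x y, s x y ↔ ∀ i, L i x y)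

/-- Order dimension: the least size of a realizer. -/
noncomputable def orderDim {X : Type} (s : X → X → Prop) : ℕ :=
  sInf {n : ℕ | ∃ L : Fin n → X → X → Prop, IsRealizer s L}

/-- The Euler-poset of a context `(G, M, I)`, on the disjoint union `G ⊕ M`:
`g < m` iff `(g,m) ∈ I`; `m₁ ≤ m₂` iff `m₁' ⊆ m₂'`; distinct objects are
incomparable; no attribute below any object. -/
def EulerLE (I : G → M → Prop) : G ⊕ M → G ⊕ M → Prop
  | Sum.inl g, Sum.inl h => g = h
  | Sum.inl g, Sum.inr m => I g m
  | Sum.inr _, Sum.inl _ => False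
  | Sum.inr m, Sum.inr n => ∀ g, I g m → I g n

/-- The underlying set of the extended Euler-poset: objects `g`, two copies
`g₁`, `g₂` of each object, attributes `m`, and special elements `a₁,…,a₄,b₁,…,b₄`. -/
inductive Ext (G M : Type) where
  | obj : G → Ext G M
  | obj1 : G → Ext G M
  | obj2 : G → Ext G M
  | attr : M → Ext G M
  | a : Fin 4 → Ext G M
  | b : Fin 4 → Ext G M

/-- The order of the extended Euler-poset (the order generated by the conditions
i)–vi), all other pairs incomparable). -/
def ExtLE (I : G → M → Prop) : Ext G M → Ext G M → Prop
  | Ext.obj g, Ext.obj h => g = h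
  | Ext.obj g, Ext.obj1 h => g = h
  | Ext.obj g, Ext.obj2 h => g = h
  | Ext.obj g, Ext.attr m => I g m
  | Ext.obj _, Ext.b _ => True
  | Ext.obj1 g, Ext.obj1 h => g = h
  | Ext.obj2 g, Ext.obj2 h => g = h
  | Ext.attr m, Ext.attr n => ∀ g, I g m → I g n
  | Ext.attr _, Ext.b _ => True
  | Ext.a i, Ext.a j => i = j
  | Ext.a i, Ext.b j => i ≠ j
  | Ext.a i, Ext.obj1 _ => i = 0 ∨ i = 1
  | Ext.a i, Ext.obj2 _ => i = 2 ∨ i = 3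
  | Ext.b i, Ext.b j => i = j
  | _, _ => False

/-- The standard example `S_d` on `{a₁,…,a_d} ⊕ {b₁,…,b_d}` with `aᵢ < b_j` iff `i ≠ j`
and no other strict comparabilities. -/
def StdLE (d : ℕ) : Fin d ⊕ Fin d → Fin d ⊕ Fin d → Prop
  | Sum.inl i, Sum.inl j => i = j
  | Sum.inl i, Sum.inr j => i ≠ j
  | Sum.inr i, Sum.inr j => i = j
  | Sum.inr _, Sum.inl _ => False

/-- Embedding of `G ∪ M` into the extended Euler-poset. -/
def embGM : G ⊕ M → Ext G M := Sum.elim Ext.obj Ext.attr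

/-- Restriction of a relation on the extended Euler-poset to `G ∪ M`. -/
def restrictGM (r : Ext G M → Ext G M → Prop) : (G ⊕ M) → (G ⊕ M) → Prop :=
  fun x y => r (embGM x) (embGM y)

end EulerFCA
open EulerFCA in
/-- The map `χ : (A,B) ↦ ⋂ b ∈ B, ψ b` is injective on the formal
concepts of a clarified context with a corresponding conceptual 1D Euler diagram. -/
theorem statement1 {G M : Type} [Fintype G] [Fintype M] (I : G → M → Prop)
    (hK : Clarified I) (E : EulerDiagram1D G M) (hcorr : Corresponds1D E I)
    (hconc : E.Conceptual) (A C : Set G) (B D : Set M)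
    (hAB : IsConcept I A B) (hCD : IsConcept I C D)
    (heq : (⋂ m ∈ B, E.interval m) = ⋂ m ∈ D, E.interval m) :
    A = C ∧ B = D := by
  -- The extent of a concept is recovered as the preimage of `χ (A, B)` under the point map;
  -- the intent is then its derivation.
  have extent : ∀ S : Set M, attrDeriv I S = E.point ⁻¹' ⋂ m ∈ S, E.interval m := fun S => by
    ext g
    simp [attrDeriv, hcorr g]
  have hA : A = C := by rw [← hAB.2, ← hCD.2, extent, extent, heq]
  exact ⟨hA, by rw [← hAB.1, ← hCD.1, hA]⟩
end

section
/- Let K=(G,M,I) be a clarified formal context. If the Euler-poset of K has order dimension at most two, then there exists a conceptual one-dimensional Euler diagram corresponding to K. -/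
/-! ### Realizers of finite orders -/

namespace EulerFCA

section Realizer

variable {X : Type} {s : X → X → Prop}

/-- Szpilrajn: a pair that is not related by a partial order is reversed by some linear
extension. -/
lemma exists_linearExtension_not (hr : ∀ x, s x x) (ha : ∀ x y, s x y → s y x → x = y)
    (ht : ∀ x y z, s x y → s y z → s x z) {x y : X} (hxy : ¬ s x y) :
    ∃ r, IsLinearExtension s r ∧ ¬ r x y := by
  -- the order generated by `s` together with the extra relation `y ≤ x`
  let t : X → X → Prop := fun a b => s a b ∨ (s a y ∧ s x b)
  have : IsPartialOrder X t :=
    { refl := fun a => Or.inl (hr a)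
      trans := by
        rintro a b c (h | ⟨h, h'⟩) (k | ⟨k, k'⟩)
        · exact Or.inl (ht _ _ _ h k)
        · exact Or.inr ⟨ht _ _ _ h k, k'⟩
        · exact Or.inr ⟨h, ht _ _ _ h' k⟩
        · exact absurd (ht _ _ _ h' k) hxy
      antisymm := by
        rintro a b (h | ⟨h, h'⟩) (k | ⟨k, k'⟩)
        · exact ha _ _ h k
        · exact absurd (ht _ _ _ k' (ht _ _ _ h k)) hxy
        · exact absurd (ht _ _ _ h' (ht _ _ _ k h)) hxy
        · exact absurd (ht _ _ _ h' k) hxy }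
  obtain ⟨r, hlin, hle⟩ := extend_partialOrder t
  refine ⟨r, ⟨⟨hlin.refl, hlin.antisymm, hlin.trans, hlin.total⟩,
    fun a b h => hle _ _ (Or.inl h)⟩, fun h => hxy ?_⟩
  have hyx : r y x := hle _ _ (Or.inr ⟨hr y, hr x⟩)
  obtain rfl := hlin.antisymm _ _ h hyx
  exact hr x

/-- Every partial order on a finite set has a realizer: the family of all its linear
extensions. -/
lemma exists_realizer [Finite X] (hr : ∀ x, s x x) (ha : ∀ x y, s x y → s y x → x = y)
    (ht : ∀ x y z, s x y → s y z → s x z) :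
    ∃ n, ∃ L : Fin n → X → X → Prop, IsRealizer s L := by
  obtain ⟨n, ⟨e⟩⟩ := Finite.exists_equiv_fin {r // IsLinearExtension s r}
  refine ⟨n, fun i => (e.symm i).1, fun i => (e.symm i).2, fun x y =>
    ⟨fun h i => (e.symm i).2.2 x y h, fun h => ?_⟩⟩
  by_contra hxy
  obtain ⟨r, hlin, hn⟩ := exists_linearExtension_not hr ha ht hxy
  have := h (e ⟨r, hlin⟩)
  simp only [Equiv.symm_apply_apply] at this
  exact hn this

/-- A partial order on a finite set of dimension at most two is the intersection of two (possibly
equal) linear orders. -/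
lemma exists_pair_of_orderDim_le_two [Finite X] (hr : ∀ x, s x x)
    (ha : ∀ x y, s x y → s y x → x = y) (ht : ∀ x y z, s x y → s y z → s x z)
    (hdim : orderDim s ≤ 2) :
    ∃ L₁ L₂ : X → X → Prop, IsLinearOrderRel L₁ ∧ IsLinearOrderRel L₂ ∧
      ∀ x y, s x y ↔ L₁ x y ∧ L₂ x y := by
  have hmem := Nat.sInf_mem (exists_realizer hr ha ht)
  change ∃ L : Fin (orderDim s) → X → X → Prop, IsRealizer s L at hmem
  generalize orderDim s = n at hmem hdim
  obtain ⟨L, hL, hs⟩ := hmem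
  interval_cases n
  · -- the empty family relates all elements, so `s` itself is linear
    have hall : ∀ x y, s x y := fun x y => (hs x y).2 fun i => i.elim0
    have hlin : IsLinearOrderRel s := ⟨hr, ha, ht, fun x y => Or.inl (hall x y)⟩
    exact ⟨s, s, hlin, hlin, fun x y => (and_self_iff).symm⟩
  · exact ⟨L 0, L 0, (hL 0).1, (hL 0).1, fun x y => by simp [hs x y]⟩
  · exact ⟨L 0, L 1, (hL 0).1, (hL 1).1, fun x y => by rw [hs x y, Fin.forall_fin_two]⟩

end Realizer

/-! ### The Euler order of a clarified context -/

variable {G M : Type} {I : G → M → Prop}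

lemma EulerLE.refl (x : G ⊕ M) : EulerLE I x x := by
  rcases x with g | m <;> simp [EulerLE]

lemma EulerLE.trans (x y z : G ⊕ M) (hxy : EulerLE I x y) (hyz : EulerLE I y z) :
    EulerLE I x z := by
  rcases x with x | x <;> rcases y with y | y <;> rcases z with z | z <;>
    simp only [EulerLE] at * <;> grind

lemma Clarified.attr_ext (hK : Clarified I) {m n : M} (h : ∀ g, I g m ↔ I g n) : m = n :=
  hK.2 m n (by ext g; simp [attrDeriv, h g])

lemma Clarified.eulerLE_antisymm (hK : Clarified I) (x y : G ⊕ M) (hxy : EulerLE I x y)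
    (hyx : EulerLE I y x) : x = y := by
  rcases x with x | x <;> rcases y with y | y <;> simp only [EulerLE] at hxy hyx
  · rw [hxy]
  · rw [hK.attr_ext fun g => ⟨hxy g, hyx g⟩]

/-! ### Diagrams from consecutive ranks -/

/-- If ranks `f` enumerate the objects as `1, …, |G|` and every extent is a set of consecutive
ranks `a m < f g ≤ b m`, then a conceptual diagram exists. -/
lemma exists_diagram [Fintype G] (hK : Clarified I) (f : G → ℕ) (a b : M → ℕ)
    (hf : Function.Injective f) (hpos : ∀ g, 1 ≤ f g) (hle : ∀ g, f g ≤ Fintype.card G)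
    (hale : ∀ m, a m ≤ Fintype.card G) (hble : ∀ m, b m ≤ Fintype.card G)
    (hI : ∀ g m, I g m ↔ a m < f g ∧ f g ≤ b m) :
    ∃ E : EulerDiagram1D G M, Corresponds1D E I ∧ E.Conceptual := by
  have hsurj : ∀ k, 1 ≤ k → k ≤ Fintype.card G → ∃ g, f g = k := by
    have himg : Finset.univ.image f = Finset.Icc 1 (Fintype.card G) := by
      apply Finset.eq_of_subset_of_card_le
      · intro k hk
        obtain ⟨g, -, rfl⟩ := Finset.mem_image.1 hk
        exact Finset.mem_Icc.2 ⟨hpos g, hle g⟩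
      · rw [Finset.card_image_of_injective _ hf]
        simp
    intro k h1 h2
    have hk : k ∈ Finset.univ.image f := himg ▸ Finset.mem_Icc.2 ⟨h1, h2⟩
    obtain ⟨g, -, hg⟩ := Finset.mem_image.1 hk
    exact ⟨g, hg⟩
  have half_le : ∀ i j : ℕ, (i : ℝ) + 1 / 2 ≤ j ↔ i < j := by
    intro i j
    constructor
    · intro h
      have : (i : ℝ) < j := by linarith
      exact_mod_cast this
    · intro h
      have : (i : ℝ) + 1 ≤ j := by exact_mod_cast h
      linarith
  have le_half : ∀ i j : ℕ, (j : ℝ) ≤ i + 1 / 2 ↔ j ≤ i := by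
    intro i j
    constructor
    · intro h
      have : (j : ℝ) < i + 1 := by linarith
      exact Nat.lt_succ_iff.1 (by exact_mod_cast this)
    · intro h
      have : (j : ℝ) ≤ i := by exact_mod_cast h
      linarith
  -- The maximum turns an empty extent with `b m < a m` into a one-point interval at a
  -- half-integer, which contains no object.
  have hmem : ∀ g m, I g m ↔
      (f g : ℝ) ∈ Set.Icc ((a m : ℝ) + 1 / 2) ((max (a m) (b m) : ℕ) + 1 / 2) := by
    intro g m
    rw [Set.mem_Icc, half_le, le_half, hI]
    omega
  refine ⟨⟨fun g => f g, fun m => a m + 1 / 2, fun m => (max (a m) (b m) : ℕ) + 1 / 2, ?_, ?_, ?_⟩,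
    hmem, ?_⟩
  · intro m
    have : (a m : ℝ) ≤ (max (a m) (b m) : ℕ) := by exact_mod_cast le_max_left _ _
    linarith
  · exact fun g h hgh => hf (Nat.cast_injective hgh)
  · intro m n hlo hhi
    exact hK.attr_ext fun g => by rw [hmem, hmem, hlo, hhi]
  · have key : ∀ i j : ℕ, j ≤ Fintype.card G → (i : ℝ) + 1 / 2 < j + 1 / 2 →
        ∃ g, (i : ℝ) + 1 / 2 < f g ∧ (f g : ℝ) < j + 1 / 2 := by
      intro i j hj hij
      have hij' : i < j := by
        have : (i : ℝ) < j := by linarith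
        exact_mod_cast this
      obtain ⟨g, hg⟩ := hsurj (i + 1) (by omega) (by omega)
      refine ⟨g, ?_, ?_⟩
      · rw [hg]; push_cast; linarith
      · have : (f g : ℝ) ≤ j := by rw [hg]; exact_mod_cast hij'
        linarith
    rintro _ _ ⟨m, rfl | rfl⟩ ⟨n, rfl | rfl⟩ hlt
    · exact key _ _ (hale n) hlt
    · exact key _ _ (max_le (hale n) (hble n)) hlt
    · exact key _ _ (hale n) hlt
    · exact key _ _ (max_le (hale n) (hble n)) hlt

end EulerFCA

/-! ### Ranks from a two-element realizer -/

open EulerFCA in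
/-- If the Euler-poset of a clarified context has order dimension at most
two, then there is a conceptual one-dimensional Euler diagram corresponding to it. -/
theorem statement4 {G M : Type} [Fintype G] [Fintype M] (I : G → M → Prop)
    (hK : Clarified I) (hdim : orderDim (EulerLE I) ≤ 2) :
    ∃ E : EulerDiagram1D G M, Corresponds1D E I ∧ E.Conceptual := by
  classical
  obtain ⟨L₁, L₂, ⟨hr₁, ha₁, ht₁, htot₁⟩, ⟨hr₂, ha₂, ht₂, htot₂⟩, hs⟩ :=
    exists_pair_of_orderDim_le_two EulerLE.refl hK.eulerLE_antisymm EulerLE.trans hdim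
  have hI : ∀ g m, I g m ↔ L₁ (.inl g) (.inr m) ∧ L₂ (.inl g) (.inr m) := fun g m =>
    hs (.inl g) (.inr m)
  have hanti : ∀ g h : G, L₁ (.inl g) (.inl h) → L₂ (.inl g) (.inl h) → g = h := fun g h h₁ h₂ =>
    (hs (.inl g) (.inl h)).2 ⟨h₁, h₂⟩
  let D : G ⊕ M → Finset G := fun x => Finset.univ.filter fun h => L₁ (.inl h) x
  let U : M → Finset G := fun m => Finset.univ.filter fun h => ¬ L₂ (.inl h) (.inr m)
  have hD : ∀ h x, h ∈ D x ↔ L₁ (.inl h) x := by simp [D]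
  have hU : ∀ h m, h ∈ U m ↔ ¬ L₂ (.inl h) (.inr m) := by simp [U]
  -- an object lies `L₁`-below `x` iff its `L₁`-rank is at most the number of objects below `x`
  have hrank : ∀ g x, L₁ (.inl g) x ↔ (D (.inl g)).card ≤ (D x).card := by
    intro g x
    constructor
    · intro h
      exact Finset.card_le_card fun k hk => (hD _ _).2 (ht₁ _ _ _ ((hD _ _).1 hk) h)
    · intro hc
      by_contra h
      have hxg : L₁ x (.inl g) := (htot₁ _ _).resolve_left h
      refine absurd hc (not_le.2 (Finset.card_lt_card ((Finset.ssubset_iff_of_subset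
        fun k hk => (hD _ _).2 (ht₁ _ _ _ ((hD _ _).1 hk) hxg)).2
          ⟨g, (hD _ _).2 (hr₁ _), fun hg => h ((hD _ _).1 hg)⟩)))
  -- the objects not `L₂`-below `m` form an initial segment of the `L₁`-order
  have hrank' : ∀ g m, L₂ (.inl g) (.inr m) ↔ (U m).card < (D (.inl g)).card := by
    intro g m
    constructor
    · intro h
      refine Finset.card_lt_card ((Finset.ssubset_iff_of_subset fun k hk => ?_).2
        ⟨g, (hD _ _).2 (hr₁ _), fun hg => (hU _ _).1 hg h⟩)
      rw [hU] at hk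
      rw [hD]
      have hkg : ¬ L₂ (.inl k) (.inl g) := fun h' => hk (ht₂ _ _ _ h' h)
      refine (htot₁ _ _).resolve_right fun hgk => hkg ?_
      rw [hanti g k hgk ((htot₂ _ _).resolve_left hkg)]
      exact hr₂ _
    · intro hc
      by_contra h
      refine absurd hc (not_lt.2 (Finset.card_le_card fun k hk => ?_))
      rw [hD] at hk
      rw [hU]
      intro hkm
      rcases htot₂ (.inl k) (.inl g) with h' | h'
      · exact h (hanti k g hk h' ▸ hkm)
      · exact h (ht₂ _ _ _ h' hkm)
  refine exists_diagram hK (fun g => (D (.inl g)).card) (fun m => (U m).card)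
    (fun m => (D (.inr m)).card) ?_ ?_ (fun _ => Finset.card_le_univ _)
    (fun _ => Finset.card_le_univ _) (fun _ => Finset.card_le_univ _) ?_
  · intro g h hgh
    exact Sum.inl_injective (ha₁ _ _ ((hrank g (.inl h)).2 hgh.le) ((hrank h (.inl g)).2 hgh.ge))
  · exact fun g => Finset.card_pos.2 ⟨g, (hD _ _).2 (hr₁ _)⟩
  · intro g m
    rw [hI, hrank, hrank', and_comm]
end

section
/- Let K=(G,M,I) be a clarified formal context, let e be the order dimension of its Euler-poset and let d be the order dimension of its concept lattice. Then e ≤ d + 1. -/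
namespace EulerFCA

section Dimension

variable {X : Type}

/-- Szpilrajn's theorem in terms of `IsLinearExtension`. -/
lemma exists_isLinearExtension {s : X → X → Prop} (hs : IsPartialOrder X s) :
    ∃ r, IsLinearExtension s r := by
  obtain ⟨r, hr, hsr⟩ := extend_partialOrder s
  exact ⟨r, ⟨fun x => hr.refl x, fun x y => hr.antisymm x y, fun x y z => hr.trans x y z,
    fun x y => hr.total x y⟩, fun x y h => hsr x y h⟩

/-- A non-relation `¬ x ≤ y` is witnessed by a linear extension: adding `y ≤ x` to the order
generates a partial order, which can be extended linearly. -/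
lemma exists_isLinearExtension_not [PartialOrder X] {x y : X} (hxy : ¬ x ≤ y) :
    ∃ r, IsLinearExtension (fun a b : X => a ≤ b) r ∧ ¬ r x y := by
  have hs : IsPartialOrder X (fun a b => a ≤ b ∨ (a ≤ y ∧ x ≤ b)) :=
    { refl := fun a => Or.inl le_rfl
      trans := by
        rintro a b c (h | ⟨h1, h2⟩) (h' | ⟨h3, h4⟩)
        · exact Or.inl (h.trans h')
        · exact Or.inr ⟨h.trans h3, h4⟩
        · exact Or.inr ⟨h1, h2.trans h'⟩
        · exact Or.inr ⟨h1, h4⟩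
      antisymm := by
        rintro a b (h | ⟨h1, h2⟩) (h' | ⟨h3, h4⟩)
        · exact le_antisymm h h'
        · exact (hxy (h4.trans (h.trans h3))).elim
        · exact (hxy (h2.trans (h'.trans h1))).elim
        · exact (hxy (h2.trans h3)).elim }
  obtain ⟨r, hr, hsr⟩ := exists_isLinearExtension hs
  refine ⟨r, ⟨hr, fun a b h => hsr a b (Or.inl h)⟩, fun h => hxy ?_⟩
  exact (hr.2.1 x y h (hsr y x (Or.inr ⟨le_rfl, le_rfl⟩))).le

lemma exists_isRealizer (X : Type) [PartialOrder X] [Finite X] :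
    ∃ (n : ℕ) (L : Fin n → X → X → Prop), IsRealizer (fun a b : X => a ≤ b) L := by
  choose r hr hnr using fun p : {p : X × X // ¬ p.1 ≤ p.2} => exists_isLinearExtension_not p.2
  obtain ⟨n, ⟨e⟩⟩ := Finite.exists_equiv_fin {p : X × X // ¬ p.1 ≤ p.2}
  refine ⟨n, fun i => r (e.symm i), fun i => hr _, fun x y =>
    ⟨fun h i => (hr _).2 x y h, fun h => ?_⟩⟩
  by_contra hxy
  refine hnr ⟨(x, y), hxy⟩ ?_
  simpa using h (e ⟨(x, y), hxy⟩)

end Dimension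

section Concepts

variable {G M : Type} {I : G → M → Prop}

lemma ofObject_le_ofAttribute {g : G} {m : M} :
    Concept.ofObject I g ≤ Concept.ofAttribute I m ↔ I g m := by
  rw [← Concept.extent_subset_extent_iff]
  constructor
  · intro h
    have hg : g ∈ (Concept.ofAttribute I m).extent := h (subset_lowerPolar_upperPolar I {g} rfl)
    simpa using hg
  · intro h k hk
    have hm : m ∈ upperPolar I {g} := by simpa using h
    have hkm : I k m := hk hm
    simpa using hkm

lemma ofAttribute_le_ofAttribute {m n : M} :
    Concept.ofAttribute I m ≤ Concept.ofAttribute I n ↔ ∀ g, I g m → I g n := by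
  rw [← Concept.extent_subset_extent_iff]
  simp [Set.subset_def]

lemma ofObject_injective (hK : Clarified I) : Function.Injective (Concept.ofObject I) := by
  intro g h e
  apply hK.1
  have := congrArg Concept.intent e
  simpa [Set.ext_iff, objDeriv] using this

lemma ofAttribute_injective (hK : Clarified I) : Function.Injective (Concept.ofAttribute I) := by
  intro m n e
  apply hK.2
  have := congrArg Concept.extent e
  simpa [Set.ext_iff, attrDeriv] using this

/-- The order on `G ⊕ M` induced by an order `r` on the concepts via object concepts and attribute
concepts. An object concept equal to an attribute concept is a tie, in which the object precedes the
attribute. -/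
def pullback (r : Concept G M I → Concept G M I → Prop) : G ⊕ M → G ⊕ M → Prop
  | Sum.inl g, Sum.inl h => r (Concept.ofObject I g) (Concept.ofObject I h)
  | Sum.inl g, Sum.inr m => r (Concept.ofObject I g) (Concept.ofAttribute I m)
  | Sum.inr m, Sum.inl g => r (Concept.ofAttribute I m) (Concept.ofObject I g) ∧
      Concept.ofAttribute I m ≠ Concept.ofObject I g
  | Sum.inr m, Sum.inr n => r (Concept.ofAttribute I m) (Concept.ofAttribute I n)

/-- The order on `G ⊕ M` with all objects before all attributes, in which an order `r` on the
concepts is used for the attributes and its reverse for the objects. -/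
def objectsFirst (r : Concept G M I → Concept G M I → Prop) : G ⊕ M → G ⊕ M → Prop
  | Sum.inl g, Sum.inl h => r (Concept.ofObject I h) (Concept.ofObject I g)
  | Sum.inl _, Sum.inr _ => True
  | Sum.inr _, Sum.inl _ => False
  | Sum.inr m, Sum.inr n => r (Concept.ofAttribute I m) (Concept.ofAttribute I n)

lemma isLinearExtension_pullback (hK : Clarified I) {r : Concept G M I → Concept G M I → Prop}
    (hr : IsLinearExtension (fun c d => c ≤ d) r) :
    IsLinearExtension (EulerLE I) (pullback r) := by
  obtain ⟨⟨hrefl, hanti, htrans, htotal⟩, hext⟩ := hr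
  refine ⟨⟨?_, ?_, ?_, ?_⟩, ?_⟩
  · rintro (g | m) <;> exact hrefl _
  · rintro (g | m) (h | n) hxy hyx
    · exact congrArg _ (ofObject_injective hK (hanti _ _ hxy hyx))
    · exact (hyx.2 (hanti _ _ hyx.1 hxy)).elim
    · exact (hxy.2 (hanti _ _ hxy.1 hyx)).elim
    · exact congrArg _ (ofAttribute_injective hK (hanti _ _ hxy hyx))
  · rintro (x | x) (y | y) (z | z) hxy hyz <;> simp only [pullback] at hxy hyz ⊢ <;> grind
  · rintro (g | m) (h | n) <;> simp only [pullback] <;> grind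
  · rintro (g | m) (h | n) hxy
    · obtain rfl : g = h := hxy
      exact hrefl _
    · exact hext _ _ (ofObject_le_ofAttribute.2 hxy)
    · exact hxy.elim
    · exact hext _ _ (ofAttribute_le_ofAttribute.2 hxy)

lemma isLinearExtension_objectsFirst (hK : Clarified I)
    {r : Concept G M I → Concept G M I → Prop} (hr : IsLinearExtension (fun c d => c ≤ d) r) :
    IsLinearExtension (EulerLE I) (objectsFirst r) := by
  obtain ⟨⟨hrefl, hanti, htrans, htotal⟩, hext⟩ := hr
  refine ⟨⟨?_, ?_, ?_, ?_⟩, ?_⟩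
  · rintro (g | m) <;> exact hrefl _
  · rintro (g | m) (h | n) hxy hyx
    · exact congrArg _ (ofObject_injective hK (hanti _ _ hyx hxy))
    · exact hyx.elim
    · exact hxy.elim
    · exact congrArg _ (ofAttribute_injective hK (hanti _ _ hxy hyx))
  · rintro (x | x) (y | y) (z | z) hxy hyz <;> simp only [objectsFirst] at hxy hyz ⊢ <;> grind
  · rintro (g | m) (h | n) <;> simp only [objectsFirst] <;> grind
  · rintro (g | m) (h | n) hxy
    · obtain rfl : g = h := hxy
      exact hrefl _
    · trivial
    · exact hxy.elim
    · exact hext _ _ (ofAttribute_le_ofAttribute.2 hxy)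

lemma isRealizer_cons (hK : Clarified I) {n : ℕ}
    {L : Fin n → Concept G M I → Concept G M I → Prop}
    (hL : IsRealizer (fun c d : Concept G M I => c ≤ d) L)
    {r : Concept G M I → Concept G M I → Prop} (hr : IsLinearExtension (fun c d => c ≤ d) r) :
    IsRealizer (EulerLE I) (Fin.cons (objectsFirst r) fun i => pullback (L i) :
      Fin (n + 1) → G ⊕ M → G ⊕ M → Prop) := by
  have hlin : ∀ i, IsLinearExtension (EulerLE I) ((Fin.cons (objectsFirst r)
      fun i => pullback (L i) : Fin (n + 1) → G ⊕ M → G ⊕ M → Prop) i) := by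
    refine Fin.cases ?_ fun i => ?_
    · exact isLinearExtension_objectsFirst hK hr
    · exact isLinearExtension_pullback hK (hL.1 i)
  refine ⟨hlin, fun x y => ⟨fun h i => (hlin i).2 x y h, fun h => ?_⟩⟩
  have h0 : objectsFirst r x y := h 0
  have hs : ∀ i, pullback (L i) x y := fun i => h i.succ
  rcases x with g | m <;> rcases y with k | l
  -- The realizer gives `γ g ≤ γ k`, hence `r (γ g) (γ k)`, while `h0` is the reverse relation.
  · exact ofObject_injective hK (hr.1.2.1 _ _ (hr.2 _ _ ((hL.2 _ _).2 hs)) h0)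
  · exact (ofObject_le_ofAttribute (I := I)).1 ((hL.2 _ _).2 hs)
  · exact h0
  · exact ofAttribute_le_ofAttribute.1 ((hL.2 _ _).2 hs)

end Concepts

end EulerFCA

open EulerFCA in
/-- For a clarified context, the order dimension `e` of the Euler-poset
is at most the order dimension `d` of the concept lattice plus one. -/
theorem statement9 {G M : Type} [Fintype G] [Fintype M] (I : G → M → Prop)
    (hK : Clarified I) :
    orderDim (EulerLE I) ≤ orderDim (fun c d : Concept G M I => c ≤ d) + 1 := by
  have : Finite (Concept G M I) := Finite.of_injective _ Concept.extent_injective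
  -- The infimum defining the dimension of the concept lattice is attained, as its set is nonempty.
  obtain ⟨L, hL⟩ := Nat.sInf_mem (s := {n : ℕ | ∃ L : Fin n → Concept G M I → Concept G M I → Prop,
    IsRealizer (fun c d => c ≤ d) L}) (exists_isRealizer (Concept G M I))
  obtain ⟨r, hr⟩ := exists_isLinearExtension
    (inferInstance : IsPartialOrder (Concept G M I) (fun c d => c ≤ d))
  exact Nat.sInf_le ⟨_, isRealizer_cons hK hL hr⟩
end

section
/- Let K=(G,M,I) be the formal context with G = {g₁,g₂,g₃,g₄,g₅}, M = {m₁,m₂,m₃,m₄}, and I = {(g₁,m₁),(g₁,m₂),(g₁,m₄),(g₂,m₂),(g₂,m₃),(g₂,m₄),(g₃,m₄),(g₄,m₁),(g₅,m₃)}. Then the concept lattice of K has order dimension two, while the Euler-poset of K has order dimension three; in particular K cannot be represented by a one-dimensional Euler diagram. -/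
namespace EulerFCA

/-! ### Realizers and order dimension -/

theorem orderDim_eq {X : Type} {s : X → X → Prop} {n : ℕ} {L : Fin n → X → X → Prop}
    (hL : IsRealizer s L)
    (hmin : ∀ (k : ℕ) (L' : Fin k → X → X → Prop), IsRealizer s L' → n ≤ k) :
    orderDim s = n := by
  refine le_antisymm (Nat.sInf_le ⟨L, hL⟩) (le_csInf ⟨n, L, hL⟩ ?_)
  rintro k ⟨L', hL'⟩
  exact hmin k L' hL'

theorem isRealizer_of_rank {X : Type} {s : X → X → Prop} {n : ℕ} (r : Fin n → X → ℕ)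
    (hinj : ∀ i, Function.Injective (r i)) (hr : ∀ x y, s x y ↔ ∀ i, r i x ≤ r i y) :
    IsRealizer s (fun i x y => r i x ≤ r i y) :=
  ⟨fun i => ⟨⟨fun _ => le_rfl, fun _ _ h h' => hinj i (le_antisymm h h'),
      fun _ _ _ h h' => h.trans h', fun _ _ => le_total _ _⟩, fun x y h => (hr x y).1 h i⟩, hr⟩

/-- A realizer with at most two members gives one of the form `{A, B}`, possibly with `A = B`. The
empty family is excluded because its intersection is the full relation. -/
theorem IsRealizer.exists_pair {X : Type} {s : X → X → Prop} {n : ℕ} {L : Fin n → X → X → Prop}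
    (hL : IsRealizer s L) (hn : n ≤ 2) (hs : ∃ x y, ¬ s x y) :
    ∃ A B, IsLinearExtension s A ∧ IsLinearExtension s B ∧ ∀ x y, A x y → B x y → s x y := by
  obtain ⟨hlin, hiff⟩ := hL
  interval_cases n
  · obtain ⟨x, y, h⟩ := hs
    exact absurd ((hiff x y).2 fun i => i.elim0) h
  · exact ⟨L 0, L 0, hlin 0, hlin 0, fun x y h _ => (hiff x y).2 (by simpa using h)⟩
  · exact ⟨L 0, L 1, hlin 0, hlin 1, fun x y h h' =>
      (hiff x y).2 (by simp [Fin.forall_fin_two, h, h'])⟩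

theorem IsRealizer.two_le {X : Type} {s : X → X → Prop} {n : ℕ} {L : Fin n → X → X → Prop}
    (hL : IsRealizer s L) {x y : X} (hxy : ¬ s x y) (hyx : ¬ s y x) : 2 ≤ n := by
  obtain ⟨hlin, hiff⟩ := hL
  by_contra! hn
  interval_cases n
  · exact hxy ((hiff x y).2 fun i => i.elim0)
  · rcases (hlin 0).1.2.2.2 x y with h | h
    · exact hxy ((hiff x y).2 (by simpa using h))
    · exact hyx ((hiff y x).2 (by simpa using h))

/-! ### The context -/

/-- The incidence relation on `Fin 5` and `Fin 4`; all indices are shifted down by one. -/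
def exampleI (g : Fin 5) (m : Fin 4) : Prop :=
  (g.val, m.val) ∈
    ([(0,0),(0,1),(0,3),(1,1),(1,2),(1,3),(2,3),(3,0),(4,2)] : List (ℕ × ℕ))

instance : DecidableRel exampleI := fun _ _ => inferInstanceAs (Decidable (_ ∈ _))

/-! ### The concept lattice -/

theorem extent_cases (c : Concept (Fin 5) (Fin 4) exampleI) :
    c.extent = ∅ ∨ c.extent = {0} ∨ c.extent = {1} ∨ c.extent = {0, 3} ∨ c.extent = {0, 1} ∨
      c.extent = {1, 4} ∨ c.extent = {0, 1, 2} ∨ c.extent = Set.univ := by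
  classical
  have key : ∀ t : Finset (Fin 4), (Finset.univ.filter fun g => ∀ m ∈ t, exampleI g m) ∈
      ({∅, {0}, {1}, {0, 3}, {0, 1}, {1, 4}, {0, 1, 2}, Finset.univ} :
        Finset (Finset (Fin 5))) := by decide
  have hext : c.extent =
      ((Finset.univ.filter fun g => ∀ m ∈ c.intent.toFinset, exampleI g m : Finset (Fin 5)) :
        Set (Fin 5)) := by
    ext g
    rw [← c.lowerPolar_intent]
    simp [lowerPolar]
  have h := key c.intent.toFinset
  rw [hext]
  simp only [Finset.mem_insert, Finset.mem_singleton] at h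
  rcases h with h | h | h | h | h | h | h | h <;> rw [h] <;> simp

/-- The total weight of the objects in the extent of a concept. -/
noncomputable def extentWeight (w : Fin 5 → ℕ) (c : Concept (Fin 5) (Fin 4) exampleI) : ℕ :=
  open Classical in ∑ g, if g ∈ c.extent then w g else 0

/-- Weights whose sums over the eight extents give two linear extensions realizing the lattice. -/
def latticeWeight : Fin 2 → Fin 5 → ℕ := ![![1, 3, 1, 1, 3], ![3, 1, 1, 3, 1]]

theorem extent_subset_iff (c d : Concept (Fin 5) (Fin 4) exampleI) :
    c.extent ⊆ d.extent ↔
      ∀ i, extentWeight (latticeWeight i) c ≤ extentWeight (latticeWeight i) d := by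
  rcases extent_cases c with h | h | h | h | h | h | h | h <;>
  rcases extent_cases d with h' | h' | h' | h' | h' | h' | h' | h' <;>
  simp [extentWeight, latticeWeight, h, h', Fin.sum_univ_five, Set.subset_def,
    Fin.forall_fin_succ]

theorem extentWeight_injective (i : Fin 2) :
    Function.Injective (extentWeight (latticeWeight i)) := by
  intro c d hcd
  apply Concept.ext
  rcases extent_cases c with h | h | h | h | h | h | h | h <;>
  rcases extent_cases d with h' | h' | h' | h' | h' | h' | h' | h' <;>
  fin_cases i <;>
  simp [extentWeight, latticeWeight, h, h', Fin.sum_univ_five] at hcd ⊢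

theorem orderDim_concept :
    orderDim (fun c c' : Concept (Fin 5) (Fin 4) exampleI => c ≤ c') = 2 := by
  refine orderDim_eq (isRealizer_of_rank (fun i => extentWeight (latticeWeight i))
    extentWeight_injective extent_subset_iff) fun k L hL => ?_
  -- The extents of the attribute concepts of `m₁` and `m₃` are `{g₁, g₄}` and `{g₂, g₅}`.
  have h : ∀ m n : Fin 4, (∃ g, exampleI g m ∧ ¬ exampleI g n) →
      ¬ Concept.ofAttribute exampleI m ≤ Concept.ofAttribute exampleI n := by
    rintro m n ⟨g, hm, hn⟩ hle
    exact hn (Concept.ofObject_le_ofAttribute_iff.1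
      ((Concept.ofObject_le_ofAttribute_iff.2 hm).trans hle))
  exact hL.two_le (h 0 2 (by decide)) (h 2 0 (by decide))

/-! ### The Euler-poset -/

instance : DecidableRel (EulerLE exampleI)
  | Sum.inl g, Sum.inl h => inferInstanceAs (Decidable (g = h))
  | Sum.inl g, Sum.inr m => inferInstanceAs (Decidable (exampleI g m))
  | Sum.inr _, Sum.inl _ => inferInstanceAs (Decidable False)
  | Sum.inr m, Sum.inr n => inferInstanceAs (Decidable (∀ g, exampleI g m → exampleI g n))

/-- Positions of the objects and attributes in three linear extensions realizing the
Euler-poset. -/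
def eulerRank : Fin 3 → Fin 5 ⊕ Fin 4 → ℕ := ![
  Sum.elim ![1, 5, 4, 0, 3] ![2, 6, 8, 7],
  Sum.elim ![1, 0, 3, 7, 5] ![8, 2, 6, 4],
  Sum.elim ![5, 1, 4, 0, 2] ![8, 6, 3, 7]]

/-- Half of the lower bound: exchanging `A` and `B` covers the case `g₂ <_A g₁`. -/
theorem no_two_realizer_aux {A B : Fin 5 ⊕ Fin 4 → Fin 5 ⊕ Fin 4 → Prop}
    (hA : IsLinearExtension (EulerLE exampleI) A) (hB : IsLinearExtension (EulerLE exampleI) B)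
    (hAB : ∀ x y, A x y → B x y → EulerLE exampleI x y) (h01 : A (.inl 0) (.inl 1)) : False := by
  obtain ⟨⟨-, -, tA, totA⟩, eA⟩ := hA
  obtain ⟨⟨-, -, tB, totB⟩, eB⟩ := hB
  have toB : ∀ x y, ¬ EulerLE exampleI x y → A x y → B y x := fun x y hn h =>
    (totB x y).resolve_left fun h' => hn (hAB x y h h')
  have toA : ∀ x y, ¬ EulerLE exampleI x y → B x y → A y x := fun x y hn h =>
    (totA x y).resolve_left fun h' => hn (hAB x y h' h)
  have b10 : B (.inl 1) (.inl 0) := toB _ _ (by decide) h01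
  have b1m0 : B (.inl 1) (.inr 0) := tB _ _ _ b10 (eB _ _ (by decide))
  have am01 : A (.inr 0) (.inl 1) := toA _ _ (by decide) b1m0
  have a0m2 : A (.inl 0) (.inr 2) := tA _ _ _ h01 (eA _ _ (by decide))
  have bm20 : B (.inr 2) (.inl 0) := toB _ _ (by decide) a0m2
  -- Otherwise `m₁` would be below `m₄` in both orders, through `g₂` in `A` and `g₃` in `B`.
  have am02 : A (.inr 0) (.inl 2) := (totA _ _).resolve_right fun h => by
    have b : B (.inr 0) (.inr 3) := tB _ _ _ (toB _ _ (by decide) h) (eB _ _ (by decide))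
    have a : A (.inr 0) (.inr 3) := tA _ _ _ am01 (eA _ _ (by decide))
    exact absurd (hAB _ _ a b) (by decide)
  have bm22 : B (.inr 2) (.inl 2) := (totB _ _).resolve_right fun h => by
    have a : A (.inr 2) (.inr 3) := tA _ _ _ (toA _ _ (by decide) h) (eA _ _ (by decide))
    have b : B (.inr 2) (.inr 3) := tB _ _ _ bm20 (eB _ _ (by decide))
    exact absurd (hAB _ _ a b) (by decide)
  have a02 : A (.inl 0) (.inl 2) := tA _ _ _ (eA _ _ (by decide)) am02
  have b12 : B (.inl 1) (.inl 2) := tB _ _ _ (eB _ _ (by decide)) bm22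
  have b2m1 : B (.inl 2) (.inr 1) := tB _ _ _ (toB _ _ (by decide) a02) (eB _ _ (by decide))
  have a2m1 : A (.inl 2) (.inr 1) := tA _ _ _ (toA _ _ (by decide) b12) (eA _ _ (by decide))
  exact absurd (hAB _ _ a2m1 b2m1) (by decide)

theorem no_two_realizer {A B : Fin 5 ⊕ Fin 4 → Fin 5 ⊕ Fin 4 → Prop}
    (hA : IsLinearExtension (EulerLE exampleI) A) (hB : IsLinearExtension (EulerLE exampleI) B)
    (hAB : ∀ x y, A x y → B x y → EulerLE exampleI x y) : False := by
  by_cases h : A (.inl 0) (.inl 1)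
  · exact no_two_realizer_aux hA hB hAB h
  · have h' : A (.inl 1) (.inl 0) := (hA.1.2.2.2 _ _).resolve_left h
    refine no_two_realizer_aux hB hA (fun x y hb ha => hAB x y ha hb) ?_
    exact (hB.1.2.2.2 _ _).resolve_right fun hb => absurd (hAB _ _ h' hb) (by decide)

theorem orderDim_euler : orderDim (EulerLE exampleI) = 3 := by
  refine orderDim_eq (isRealizer_of_rank eulerRank (by decide) (by decide)) fun k L hL => ?_
  by_contra! hk
  obtain ⟨A, B, hA, hB, hAB⟩ :=
    hL.exists_pair (by omega) ⟨.inl 0, .inl 1, by decide⟩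
  exact no_two_realizer hA hB hAB

/-! ### One-dimensional diagrams -/

theorem no_diagram (E : EulerDiagram1D (Fin 5) (Fin 4)) (hE : Corresponds1D E exampleI) :
    False := by
  -- An object `k` outside an interval cannot lie between two objects `g`, `h` inside it; the
  -- instances below leave no possible order of the five points.
  have btw : ∀ m g h k, exampleI g m → exampleI h m → ¬ exampleI k m →
      E.point g ≤ E.point k → E.point h < E.point k := by
    intro m g h k hg hh hk hgk
    by_contra! hkh
    exact hk ((hE k m).2 ⟨((hE g m).1 hg).1.trans hgk, hkh.trans ((hE h m).1 hh).2⟩)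
  have m0a := btw 0 0 3 1 (by decide) (by decide) (by decide)
  have m0b := btw 0 3 0 1 (by decide) (by decide) (by decide)
  have m0c := btw 0 0 3 2 (by decide) (by decide) (by decide)
  have m0d := btw 0 3 0 2 (by decide) (by decide) (by decide)
  have m1a := btw 1 0 1 2 (by decide) (by decide) (by decide)
  have m1b := btw 1 1 0 2 (by decide) (by decide) (by decide)
  have m1c := btw 1 0 1 3 (by decide) (by decide) (by decide)
  have m1d := btw 1 1 0 3 (by decide) (by decide) (by decide)
  have m1e := btw 1 0 1 4 (by decide) (by decide) (by decide)
  have m1f := btw 1 1 0 4 (by decide) (by decide) (by decide)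
  have m2a := btw 2 1 4 0 (by decide) (by decide) (by decide)
  have m2b := btw 2 4 1 0 (by decide) (by decide) (by decide)
  have m2c := btw 2 1 4 2 (by decide) (by decide) (by decide)
  have m2d := btw 2 4 1 2 (by decide) (by decide) (by decide)
  have m3a := btw 3 0 2 3 (by decide) (by decide) (by decide)
  have m3b := btw 3 2 0 3 (by decide) (by decide) (by decide)
  have m3c := btw 3 1 2 4 (by decide) (by decide) (by decide)
  have m3d := btw 3 2 1 4 (by decide) (by decide) (by decide)
  clear btw hE
  grind

end EulerFCA


open EulerFCA in
/-- For the concrete context with objects `g₁,…,g₅` and attributes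
`m₁,…,m₄` given by the stated incidence table, the concept lattice has order
dimension two, the Euler-poset has order dimension three, and in particular the
context cannot be represented by a one-dimensional Euler diagram. -/
theorem statement11 (I : Fin 5 → Fin 4 → Prop)
    (hI : ∀ g m, I g m ↔ (g.val, m.val) ∈
      ([(0,0),(0,1),(0,3),(1,1),(1,2),(1,3),(2,3),(3,0),(4,2)] : List (ℕ × ℕ))) :
    orderDim (fun c c' : Concept (Fin 5) (Fin 4) I => c ≤ c') = 2 ∧
    orderDim (EulerLE I) = 3 ∧
    ¬ ∃ E : EulerDiagram1D (Fin 5) (Fin 4), Corresponds1D E I := by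
  obtain rfl : I = exampleI := by
    funext g m
    exact propext (hI g m)
  exact ⟨orderDim_concept, orderDim_euler, fun ⟨E, hE⟩ => no_diagram E hE⟩
end

section
/- Let K be the formal context with three objects {Bulgaria, Croatia, Norway} and three attributes {EEA, EU, Schengen}, where the incidence relation is I = {(Bulgaria,EEA),(Bulgaria,EU),(Croatia,EU),(Croatia,Schengen),(Norway,EEA),(Norway,Schengen)}. Then K cannot be represented by a one-dimensional Euler diagram, i.e., there is no one-dimensional Euler diagram corresponding to K. -/
/-- One of any three reals lies between the other two. -/
theorem exists_median (x y z : ℝ) :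
    x ∈ Set.uIcc y z ∨ y ∈ Set.uIcc x z ∨ z ∈ Set.uIcc x y := by
  simp only [Set.mem_uIcc]
  grind

/-- The set of objects having an attribute is convex with respect to the positions of the
points. -/
theorem incident_of_mem_uIcc {G M : Type} {I : G → M → Prop} {E : EulerFCA.EulerDiagram1D G M}
    (hE : EulerFCA.Corresponds1D E I) {g h k : G} {m : M} (hh : I h m) (hk : I k m)
    (hg : E.point g ∈ Set.uIcc (E.point h) (E.point k)) : I g m :=
  (hE g m).2 (Set.uIcc_subset_Icc ((hE h m).1 hh) ((hE k m).1 hk) hg)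

open EulerFCA in
/-- The context with objects Bulgaria (0), Croatia (1), Norway (2) and
attributes EEA (0), EU (1), Schengen (2) and incidence
`{(Bulgaria,EEA),(Bulgaria,EU),(Croatia,EU),(Croatia,Schengen),(Norway,EEA),(Norway,Schengen)}`
cannot be represented by a one-dimensional Euler diagram. -/
theorem statement12 (I : Fin 3 → Fin 3 → Prop)
    (hI : ∀ g m, I g m ↔ (g.val, m.val) ∈
      ([(0,0),(0,1),(1,1),(1,2),(2,0),(2,2)] : List (ℕ × ℕ))) :
    ¬ ∃ E : EulerDiagram1D (Fin 3) (Fin 3), Corresponds1D E I := by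
  rintro ⟨E, hE⟩
  rcases exists_median (E.point 0) (E.point 1) (E.point 2) with h | h | h
  -- Bulgaria in the middle: Croatia and Norway share Schengen
  · have := incident_of_mem_uIcc (m := 2) hE (by simp [hI]) (by simp [hI]) h
    simp [hI] at this
  -- Croatia in the middle: Bulgaria and Norway share EEA
  · have := incident_of_mem_uIcc (m := 0) hE (by simp [hI]) (by simp [hI]) h
    simp [hI] at this
  -- Norway in the middle: Bulgaria and Croatia share EU
  · have := incident_of_mem_uIcc (m := 1) hE (by simp [hI]) (by simp [hI]) h
    simp [hI] at this
end

section
/- A clarified formal context K=(G,M,I) can be represented by a two-dimensional Euler diagram if and only if there exist incidence relations I₁, I₂ ⊆ G × M with I = I₁ ∩ I₂ such that both formal contexts K₁=(G,M,I₁) and K₂=(G,M,I₂) can be represented by one-dimensional Euler diagrams. -/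
namespace EulerFCA

lemma exists_gap {ι : Type} [Finite ι] (h : ι → ℝ) :
    ∃ ε > 0, ∀ i j, h i < h j → h i + 2 * ε < h j := by
  have key : ∀ᶠ ε : ℝ in nhdsWithin 0 (Set.Ioi 0), ∀ i j, h i < h j → h i + 2 * ε < h j := by
    rw [Filter.eventually_all]
    intro i
    rw [Filter.eventually_all]
    intro j
    by_cases hij : h i < h j
    · have hpos : 0 < (h j - h i) / 2 := by linarith
      filter_upwards [Ioo_mem_nhdsGT hpos] with ε hε _
      linarith [hε.2]
    · exact Filter.Eventually.of_forall fun _ hlt => absurd hlt hij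
  obtain ⟨ε, h1, h2⟩ := (key.and self_mem_nhdsWithin).exists
  exact ⟨ε, h2, h1⟩

lemma exists_injective_unit (α : Type) [Finite α] :
    ∃ u : α → ℝ, Function.Injective u ∧ ∀ a, 0 < u a ∧ u a < 1 := by
  obtain ⟨k, hk⟩ := Countable.exists_injective_nat α
  refine ⟨fun a => 1 / ((k a : ℝ) + 2), fun a b hab => ?_, fun a => ⟨by positivity, ?_⟩⟩
  · simp only [one_div, inv_inj, add_left_inj, Nat.cast_inj] at hab
    exact hk hab
  · rw [div_lt_one (by positivity)]
    linarith [Nat.cast_nonneg (α := ℝ) (k a)]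

/-- Finitely many points and nonempty closed intervals on the line, possibly with repetitions, can
be perturbed to an Euler diagram with the same incidence. -/
lemma exists_diagram1D {G M : Type} [Finite G] [Finite M] (p : G → ℝ) (lo hi : M → ℝ)
    (hle : ∀ m, lo m ≤ hi m) :
    ∃ E : EulerDiagram1D G M, Corresponds1D E (fun g m => p g ∈ Set.Icc (lo m) (hi m)) := by
  obtain ⟨ε, hε, gap⟩ := exists_gap (Sum.elim p (Sum.elim lo hi))
  obtain ⟨u, hu, hu'⟩ := exists_injective_unit G
  obtain ⟨v, hv, hv'⟩ := exists_injective_unit M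
  have u0 : ∀ g, 0 < ε * u g := fun g => mul_pos hε (hu' g).1
  have u1 : ∀ g, ε * u g < ε := fun g => mul_lt_of_lt_one_right hε (hu' g).2
  have v0 : ∀ m, 0 < ε * v m := fun m => mul_pos hε (hv' m).1
  have v1 : ∀ m, ε * v m < ε := fun m => mul_lt_of_lt_one_right hε (hv' m).2
  have gpp : ∀ g h, p g < p h → p g + 2 * ε < p h := fun g h => gap (.inl g) (.inl h)
  have gpl : ∀ g m, p g < lo m → p g + 2 * ε < lo m := fun g m => gap (.inl g) (.inr (.inl m))
  have ghp : ∀ m g, hi m < p g → hi m + 2 * ε < p g := fun m g => gap (.inr (.inr m)) (.inl g)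
  have ghh : ∀ m n, hi m < hi n → hi m + 2 * ε < hi n :=
    fun m n => gap (.inr (.inr m)) (.inr (.inr n))
  refine ⟨{ point := fun g => p g + ε * u g
            lo := lo
            hi := fun m => hi m + ε + ε * v m
            lo_le_hi := fun m => by linarith [hle m, v0 m]
            point_inj := ?_
            interval_inj := ?_ }, ?_⟩
  · intro g h hgh
    simp only at hgh
    rcases lt_trichotomy (p g) (p h) with hlt | heq | hlt
    · linarith [gpp g h hlt, u1 g, u0 h]
    · exact hu (mul_left_cancel₀ hε.ne' (by linarith))
    · linarith [gpp h g hlt, u1 h, u0 g]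
  · intro m n _ hmn
    rcases lt_trichotomy (hi m) (hi n) with hlt | heq | hlt
    · linarith [ghh m n hlt, v1 m, v0 n]
    · exact hv (mul_left_cancel₀ hε.ne' (by linarith))
    · linarith [ghh n m hlt, v1 n, v0 m]
  · intro g m
    simp only [EulerDiagram1D.interval, Set.mem_Icc]
    constructor
    · rintro ⟨h1, h2⟩
      constructor <;> linarith [u0 g, u1 g, v0 m]
    · rintro ⟨h1, h2⟩
      constructor
      · by_contra! hlt
        linarith [gpl g m hlt, u1 g]
      · by_contra! hlt
        linarith [ghp m g hlt, u0 g, v1 m]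

end EulerFCA

open EulerFCA in
/-- A clarified context `(G,M,I)` can be represented by a two-dimensional
Euler diagram iff there are incidences `I₁, I₂` with `I = I₁ ∩ I₂` such that both
`(G,M,I₁)` and `(G,M,I₂)` can be represented by one-dimensional Euler diagrams. -/
theorem statement13 {G M : Type} [Fintype G] [Fintype M] (I : G → M → Prop)
    (hK : Clarified I) :
    (∃ E : EulerDiagram2D G M, Corresponds2D E I) ↔
      ∃ I₁ I₂ : G → M → Prop, (∀ g m, I g m ↔ I₁ g m ∧ I₂ g m) ∧
        (∃ E₁ : EulerDiagram1D G M, Corresponds1D E₁ I₁) ∧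
        (∃ E₂ : EulerDiagram1D G M, Corresponds1D E₂ I₂) := by
  constructor
  · rintro ⟨E, hE⟩
    exact ⟨_, _, hE, exists_diagram1D _ _ _ E.lo_le_hi₁, exists_diagram1D _ _ _ E.lo_le_hi₂⟩
  · rintro ⟨I₁, I₂, hI, ⟨E₁, h₁⟩, E₂, h₂⟩
    refine ⟨{ point := fun g => (E₁.point g, E₂.point g)
              lo := fun m => (E₁.lo m, E₂.lo m)
              hi := fun m => (E₁.hi m, E₂.hi m)
              lo_le_hi₁ := E₁.lo_le_hi
              lo_le_hi₂ := E₂.lo_le_hi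
              point_inj := fun g h hgh => E₁.point_inj (congrArg Prod.fst hgh)
              rect_inj := fun m n hl hh =>
                E₁.interval_inj m n (congrArg Prod.fst hl) (congrArg Prod.fst hh) }, ?_⟩
    intro g m
    rw [hI, h₁, h₂]
    rfl
end

section
/- Let K=(G,M,I) be a clarified formal context and let {L₁,L₂,L₃,L₄} be a realizer of the extended Euler-poset of K, indexed so that b_i < a_i in L_i for each i ∈ {1,2,3,4}. Then for any two distinct objects g, h ∈ G: g < h in L₁ if and only if h < g in L₂, and g < h in L₃ if and only if h < g in L₄. -/
open EulerFCA in
/-- An object `g` lies, in `L i`, below everything above `a i`. Hence, if `c` is above `h` but not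
above `g`, the linear extension in which `c` precedes `g` (and thus `h` precedes `g`) has an index
`i` for which `a i` is not below `c`. -/
lemma exists_obj_le_obj {G M : Type} {I : G → M → Prop}
    {L : Fin 4 → Ext G M → Ext G M → Prop} (hreal : IsRealizer (ExtLE I) L)
    (hidx : ∀ i : Fin 4, L i (Ext.b i) (Ext.a i)) {g h : G} {c : Ext G M}
    (hc : ExtLE I (Ext.obj h) c) (gc : ¬ ExtLE I (Ext.obj g) c) :
    ∃ i, ¬ ExtLE I (Ext.a i) c ∧ L i (Ext.obj h) (Ext.obj g) := by
  obtain ⟨hext, hiff⟩ := hreal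
  obtain ⟨i, hi⟩ := not_forall.1 (mt (hiff _ _).2 gc)
  obtain ⟨⟨-, -, htrans, htotal⟩, hle⟩ := hext i
  refine ⟨i, fun hac => hi ?_, ?_⟩
  · have hgb : ExtLE I (Ext.obj g) (Ext.b i) := trivial
    exact htrans _ _ _ (hle _ _ hgb) (htrans _ _ _ (hidx i) (hle _ _ hac))
  · exact htrans _ _ _ (hle _ _ hc) ((htotal _ _).resolve_left hi)

open EulerFCA in
/-- Let `{L₁,L₂,L₃,L₄}` (here `L 0, L 1, L 2, L 3`) be a realizer of the
extended Euler-poset of a clarified context, indexed so that `bᵢ < aᵢ` in `Lᵢ`. Then for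
distinct objects `g ≠ h`: `g < h` in `L₁` iff `h < g` in `L₂`, and `g < h` in `L₃` iff
`h < g` in `L₄`. -/
theorem statement15 {G M : Type} [Fintype G] [Fintype M] (I : G → M → Prop)
    (hK : Clarified I) (L : Fin 4 → Ext G M → Ext G M → Prop)
    (hreal : IsRealizer (ExtLE I) L)
    (hidx : ∀ i : Fin 4, L i (Ext.b i) (Ext.a i)) :
    ∀ g h : G, g ≠ h →
      ((L 0 (Ext.obj g) (Ext.obj h) ↔ L 1 (Ext.obj h) (Ext.obj g)) ∧
       (L 2 (Ext.obj g) (Ext.obj h) ↔ L 3 (Ext.obj h) (Ext.obj g))) := by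
  have h01 : ∀ g h : G, g ≠ h →
      L 0 (Ext.obj h) (Ext.obj g) ∨ L 1 (Ext.obj h) (Ext.obj g) := by
    intro g h hne
    obtain ⟨i, hi, hL⟩ := exists_obj_le_obj (c := Ext.obj2 h) hreal hidx rfl hne
    fin_cases i <;> simp_all [ExtLE]
  have h23 : ∀ g h : G, g ≠ h →
      L 2 (Ext.obj h) (Ext.obj g) ∨ L 3 (Ext.obj h) (Ext.obj g) := by
    intro g h hne
    obtain ⟨i, hi, hL⟩ := exists_obj_le_obj (c := Ext.obj1 h) hreal hidx rfl hne
    fin_cases i <;> simp_all [ExtLE]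
  intro g h hne
  have hasymm : ∀ i, L i (Ext.obj g) (Ext.obj h) → ¬ L i (Ext.obj h) (Ext.obj g) :=
    fun i h₁ h₂ => hne (Ext.obj.inj ((hreal.1 i).1.2.1 _ _ h₁ h₂))
  have := h01 g h hne
  have := h01 h g hne.symm
  have := h23 g h hne
  have := h23 h g hne.symm
  have := hasymm 0
  have := hasymm 1
  have := hasymm 2
  have := hasymm 3
  tauto
end
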